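/- Every nonempty finite set S of dyadic squares in [0,1]² with pairwise disjoint interiors contains a square s that is corner-adjacent to at most five other squares of S. (Equivalently, the corner-adjacency graph of any subset of the squares of a quadtree has a vertex of degree at most five, i.e., the corner-adjacency graph of a quadtree is 5-degenerate.) -/

import Mathlib

/-- A dyadic square `[i/2^k, (i+1)/2^k] × [j/2^k, (j+1)/2^k] ⊆ [0,1]²`,
recorded by its level `k` and coordinates `i, j < 2^k`. -/
structure DyadicSquare where
  k : ℕ
  i : ℕ
  j : ℕ
  hi : i < 2 ^ k
  hj : j < 2 ^ k
deriving DecidableEq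

namespace DyadicSquare

/-- The subset of the plane occupied by a dyadic square. -/
def region (s : DyadicSquare) : Set (ℝ × ℝ) :=
  Set.Icc ((s.i : ℝ) / 2 ^ s.k) (((s.i : ℝ) + 1) / 2 ^ s.k) ×ˢ
    Set.Icc ((s.j : ℝ) / 2 ^ s.k) (((s.j : ℝ) + 1) / 2 ^ s.k)

/-- Two squares are edge-adjacent if they are distinct and their intersection
contains more than one point (a segment of positive length). -/
def EdgeAdj (s t : DyadicSquare) : Prop :=
  s ≠ t ∧ (s.region ∩ t.region).Nontrivial

/-- Two squares are corner-adjacent if they are distinct and their intersection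
is nonempty (they share at least a corner point or part of an edge). -/
def CornerAdj (s t : DyadicSquare) : Prop :=
  s ≠ t ∧ (s.region ∩ t.region).Nonempty

end DyadicSquare

/-- A finite set of dyadic squares has pairwise disjoint interiors. -/
def PairwiseDisjointInteriors (Q : Finset DyadicSquare) : Prop :=
  (Q : Set DyadicSquare).Pairwise fun s t =>
    interior s.region ∩ interior t.region = ∅

/-- A quadtree: a finite set of dyadic squares with pairwise disjoint interiors
whose union is the unit square `[0,1]²`. -/
def IsQuadtree (Q : Finset DyadicSquare) : Prop :=
  PairwiseDisjointInteriors Q ∧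
    (⋃ s ∈ Q, s.region) = Set.Icc (0 : ℝ) 1 ×ˢ Set.Icc (0 : ℝ) 1

/-- A quadtree is balanced if any two edge-adjacent squares have side lengths
(`2^{-k}`) within a factor of two of each other. -/
def IsBalanced (Q : Finset DyadicSquare) : Prop :=
  ∀ s ∈ Q, ∀ t ∈ Q, DyadicSquare.EdgeAdj s t → s.k ≤ t.k + 1 ∧ t.k ≤ s.k + 1

/-!
In the family, let `s` have the largest sum `x + y` of lower left corner coordinates and, among the
squares attaining it, the smallest side. A neighbour `t` on the left of `s` cannot have its bottom
edge strictly between the bottom and the top of `s`: alignment would make `t` smaller than `s` with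
a sum at least as large, against the choice of `s`. So every neighbour on the left has one of three
points just left of `s` in its interior: slightly below the bottom of `s`, slightly above the
bottom, or slightly above the top. The same holds below `s` with the coordinates exchanged, and the
two triples share the point at the lower left corner. Neighbours on the right of `s` or above it are
forced by the choice of `s` to contain the outermost point of one of the triples. So every neighbour
has one of five points in its interior, and disjoint interiors share no point.
-/

/-- An axis-parallel closed square in the plane, recorded by its lower left corner `(x, y)` and its
side length. -/
structure AxisSquare where
  x : ℝ
  y : ℝ
  side : ℝ
  side_pos : 0 < side

namespace AxisSquare

/-- The subset of the plane occupied by a square. -/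
def region (s : AxisSquare) : Set (ℝ × ℝ) :=
  Set.Icc s.x (s.x + s.side) ×ˢ Set.Icc s.y (s.y + s.side)

/-- Two squares are aligned if corresponding coordinates of their lower left corners agree or
differ by at least the smaller side. This is the only trace of the dyadic structure that the
degeneracy bound needs: it holds for any two cells of nested grids. -/
def Aligned (s t : AxisSquare) : Prop :=
  (s.x = t.x ∨ min s.side t.side ≤ |s.x - t.x|) ∧
    (s.y = t.y ∨ min s.side t.side ≤ |s.y - t.y|)

/-- The key whose maximiser has few neighbours: the sum of the corner coordinates, ties being broken
in favour of smaller squares. -/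
noncomputable def rank (s : AxisSquare) : ℝ ×ₗ ℝ :=
  toLex (s.x + s.y, -s.side)

/-- Five points at distance `ε` from the lines bounding `s`, one of which lies in each neighbour of
`s` of rank at most that of `s`. -/
noncomputable def probes (s : AxisSquare) (ε : ℝ) : Finset (ℝ × ℝ) :=
  {(s.x - ε, s.y - ε), (s.x - ε, s.y + ε), (s.x - ε, s.y + s.side + ε),
    (s.x + ε, s.y - ε), (s.x + s.side + ε, s.y - ε)}

theorem interior_region (s : AxisSquare) :
    interior s.region =
      Set.Ioo s.x (s.x + s.side) ×ˢ Set.Ioo s.y (s.y + s.side) := by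
  rw [region, interior_prod_eq, interior_Icc, interior_Icc]

theorem region_inter_nonempty_iff {s t : AxisSquare} :
    (s.region ∩ t.region).Nonempty ↔
      (t.x ≤ s.x + s.side ∧ s.x ≤ t.x + t.side) ∧
        t.y ≤ s.y + s.side ∧ s.y ≤ t.y + t.side := by
  have hs := s.side_pos.le
  have ht := t.side_pos.le
  simp only [region, Set.prod_inter_prod, Set.prod_nonempty_iff, Set.Icc_inter_Icc,
    Set.nonempty_Icc, sup_le_iff, le_inf_iff, le_add_iff_nonneg_right, hs, ht, true_and, and_true]

theorem disjoint_interior_region_iff {s t : AxisSquare} :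
    Disjoint (interior s.region) (interior t.region) ↔
      (t.x + t.side ≤ s.x ∨ s.x + s.side ≤ t.x) ∨
        t.y + t.side ≤ s.y ∨ s.y + s.side ≤ t.y := by
  have hs := s.side_pos
  have ht := t.side_pos
  simp only [interior_region, Set.disjoint_prod, Set.Ioo_disjoint_Ioo, inf_le_iff, le_sup_iff,
    add_le_iff_nonpos_right, hs.not_ge, ht.not_ge, false_or, or_false]

theorem rank_le_rank_iff {s t : AxisSquare} :
    t.rank ≤ s.rank ↔
      t.x + t.y < s.x + s.y ∨ t.x + t.y = s.x + s.y ∧ s.side ≤ t.side := by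
  simp only [rank, Prod.Lex.toLex_le_toLex, neg_le_neg_iff]

theorem card_probes_le (s : AxisSquare) (ε : ℝ) : (s.probes ε).card ≤ 5 :=
  Finset.card_le_five

/-- Here `[a, a + w]` and `[b, b + v]` are the projections of a square and of a neighbour on its
left to the vertical axis (or of a neighbour below it to the horizontal one); `hle` and `htie` are
what comparison of ranks says about such a neighbour. -/
theorem exists_mem_Ioo_of_touching {a b v w ε : ℝ} (hε : 0 < ε) (hεv : ε < v) (hεw : ε < w)
    (hba : b ≤ a + w) (hab : a ≤ b + v) (halign : a = b ∨ min w v ≤ |a - b|)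
    (hle : b ≤ a + v) (htie : b = a + v → w ≤ v) :
    ∃ c ∈ ({a - ε, a + ε, a + w + ε} : Finset ℝ), c ∈ Set.Ioo b (b + v) := by
  rcases lt_trichotomy b a with hlt | rfl | hgt
  · have hgap : min w v ≤ a - b := by
      simpa only [hlt.ne', false_or, abs_of_pos (sub_pos.2 hlt)] using halign
    have hεgap : ε < a - b := (lt_min hεw hεv).trans_le hgap
    exact ⟨a - ε, by simp, by linarith, by linarith⟩
  · exact ⟨b + ε, by simp, by linarith, by linarith⟩
  · have hgap : min w v ≤ b - a := by
      simpa only [hgt.ne, false_or, abs_of_neg (sub_neg.2 hgt), neg_sub] using halign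
    have hb : b = a + w := by
      rcases min_le_iff.1 hgap with hw | hv
      · linarith
      · have hwv : w ≤ v := htie (by linarith)
        linarith
    exact ⟨a + w + ε, by simp, by linarith, by linarith⟩

theorem exists_mem_probes_mem_interior {s t : AxisSquare} {ε : ℝ} (hε : 0 < ε)
    (hεs : ε < s.side) (hεt : ε < t.side) (halign : s.Aligned t) (hrank : t.rank ≤ s.rank)
    (htouch : (s.region ∩ t.region).Nonempty)
    (hdisj : Disjoint (interior s.region) (interior t.region)) :
    ∃ p ∈ s.probes ε, p ∈ interior t.region := by
  obtain ⟨hx, hy⟩ := halign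
  obtain ⟨⟨hts_x, hst_x⟩, hts_y, hst_y⟩ := region_inter_nonempty_iff.1 htouch
  have hsum : t.x + t.y ≤ s.x + s.y := by
    rcases rank_le_rank_iff.1 hrank with h | h
    exacts [h.le, h.1.le]
  have htie (h : t.x + t.y = s.x + s.y) : s.side ≤ t.side :=
    ((rank_le_rank_iff.1 hrank).resolve_left h.not_lt).2
  rw [interior_region]
  rcases disjoint_interior_region_iff.1 hdisj with (left | right) | below | above
  · obtain ⟨c, hc, hct⟩ := exists_mem_Ioo_of_touching hε hεt hεs hts_y hst_y hy
      (by linarith) (fun h => htie (by linarith))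
    refine ⟨(s.x - ε, c), ?_, ⟨by linarith, by linarith⟩, hct⟩
    simp only [Finset.mem_insert, Finset.mem_singleton] at hc
    rcases hc with rfl | rfl | rfl <;> simp [probes]
  · exact ⟨(s.x + s.side + ε, s.y - ε), by simp [probes], ⟨by linarith, by linarith⟩,
      by linarith, by linarith⟩
  · obtain ⟨c, hc, hct⟩ := exists_mem_Ioo_of_touching hε hεt hεs hts_x hst_x hx
      (by linarith) (fun h => htie (by linarith))
    refine ⟨(c, s.y - ε), ?_, hct, by linarith, by linarith⟩
    simp only [Finset.mem_insert, Finset.mem_singleton] at hc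
    rcases hc with rfl | rfl | rfl <;> simp [probes]
  · exact ⟨(s.x - ε, s.y + s.side + ε), by simp [probes], ⟨by linarith, by linarith⟩,
      by linarith, by linarith⟩

theorem exists_pos_forall_lt_side {ι : Type*} (S : Finset ι) (Q : ι → AxisSquare) :
    ∃ ε > 0, ∀ i ∈ S, ε < (Q i).side := by
  rcases S.eq_empty_or_nonempty with rfl | hne
  · exact ⟨1, one_pos, by simp⟩
  · obtain ⟨m, -, hm⟩ := S.exists_min_image (fun i => (Q i).side) hne
    exact ⟨(Q m).side / 2, half_pos (Q m).side_pos,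
      fun i hi => (half_lt_self (Q m).side_pos).trans_le (hm i hi)⟩

end AxisSquare

open scoped Classical in
theorem dyadic_squares_corner_degeneracy_general {ι : Type*} (S : Finset ι) (Q : ι → AxisSquare)
    (hne : S.Nonempty) (halign : (S : Set ι).Pairwise fun i j => (Q i).Aligned (Q j))
    (hdisj : (S : Set ι).PairwiseDisjoint fun i => interior (Q i).region) :
    ∃ i ∈ S, (S.filter fun j => i ≠ j ∧ ((Q i).region ∩ (Q j).region).Nonempty).card ≤ 5 := by
  obtain ⟨i, hi, hmax⟩ := S.exists_max_image (fun j => (Q j).rank) hne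
  obtain ⟨ε, hε, hεS⟩ := AxisSquare.exists_pos_forall_lt_side S Q
  refine ⟨i, hi, le_trans ?_ ((Q i).card_probes_le ε)⟩
  refine Finset.card_le_card_of_forall_subsingleton (fun j p => p ∈ interior (Q j).region) ?_ ?_
  · intro j hj
    obtain ⟨hjS, hij, htouch⟩ := Finset.mem_filter.1 hj
    exact AxisSquare.exists_mem_probes_mem_interior hε (hεS i hi) (hεS j hjS)
      (halign hi hjS hij) (hmax j hjS) htouch (hdisj hi hjS hij)
  · rintro p - j ⟨hj, hpj⟩ l ⟨hl, hpl⟩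
    exact hdisj.elim_set (Finset.mem_filter.1 hj).1 (Finset.mem_filter.1 hl).1 p hpj hpl

theorem div_pow_eq_or_min_le_abs_sub {b : ℕ} (hb : 0 < b) (i j : ℤ) (k l : ℕ) :
    (i : ℝ) / b ^ k = j / b ^ l ∨
      min (1 / (b : ℝ) ^ k) (1 / (b : ℝ) ^ l) ≤ |(i : ℝ) / b ^ k - j / b ^ l| := by
  wlog hkl : k ≤ l generalizing i j k l
  · rw [eq_comm, min_comm, abs_sub_comm]
    exact this j i l k (le_of_not_ge hkl)
  obtain ⟨d, rfl⟩ := Nat.exists_eq_add_of_le hkl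
  have hb' : (0 : ℝ) < b := Nat.cast_pos.2 hb
  have hsub : (i : ℝ) / b ^ k - j / b ^ (k + d) = (i * b ^ d - j : ℤ) / (b : ℝ) ^ (k + d) := by
    push_cast
    rw [pow_add, sub_div, mul_div_mul_right _ _ (pow_pos hb' d).ne']
  rcases eq_or_ne (i * (b : ℤ) ^ d - j) 0 with hzero | hzero
  · exact .inl (sub_eq_zero.1 (by rw [hsub, hzero, Int.cast_zero, zero_div]))
  · refine .inr (min_le_of_right_le ?_)
    rw [hsub, abs_div, abs_of_pos (pow_pos hb' _)]
    gcongr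
    exact_mod_cast Int.one_le_abs hzero

namespace DyadicSquare

/-- A dyadic square as a square in the plane, forgetting its level and its indices. -/
noncomputable def toAxisSquare (s : DyadicSquare) : AxisSquare where
  x := s.i / 2 ^ s.k
  y := s.j / 2 ^ s.k
  side := 1 / 2 ^ s.k
  side_pos := by positivity

theorem region_toAxisSquare (s : DyadicSquare) : s.toAxisSquare.region = s.region := by
  simp only [AxisSquare.region, toAxisSquare, region, add_div]

theorem aligned_toAxisSquare (s t : DyadicSquare) : s.toAxisSquare.Aligned t.toAxisSquare :=
  ⟨by simpa only [toAxisSquare, Int.cast_natCast, Nat.cast_ofNat] using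
      div_pow_eq_or_min_le_abs_sub two_pos s.i t.i s.k t.k,
    by simpa only [toAxisSquare, Int.cast_natCast, Nat.cast_ofNat] using
      div_pow_eq_or_min_le_abs_sub two_pos s.j t.j s.k t.k⟩

theorem pairwiseDisjoint_interior_toAxisSquare_iff {S : Finset DyadicSquare} :
    ((S : Set DyadicSquare).PairwiseDisjoint fun s => interior s.toAxisSquare.region) ↔
      PairwiseDisjointInteriors S := by
  simp only [Set.PairwiseDisjoint, Set.Pairwise, PairwiseDisjointInteriors, Function.onFun,
    region_toAxisSquare, Set.disjoint_iff_inter_eq_empty]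

end DyadicSquare

open scoped Classical in
/-- Any nonempty finite set of dyadic squares with pairwise disjoint interiors
contains a square corner-adjacent to at most five of the others: the
corner-adjacency graph of a quadtree is 5-degenerate. -/
theorem dyadic_squares_corner_degeneracy (S : Finset DyadicSquare)
    (hne : S.Nonempty) (hdisj : PairwiseDisjointInteriors S) :
    ∃ s ∈ S, (S.filter fun t => DyadicSquare.CornerAdj s t).card ≤ 5 := by
  convert dyadic_squares_corner_degeneracy_general S DyadicSquare.toAxisSquare hne
    (fun s _ t _ _ => s.aligned_toAxisSquare t)
    (DyadicSquare.pairwiseDisjoint_interior_toAxisSquare_iff.2 hdisj)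
  simp only [DyadicSquare.CornerAdj, DyadicSquare.region_toAxisSquare]
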